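/- Variational characterization of σ^B: let ν₁, …, ν_n be real values and let σ^B be the unique non-singular Beppo Levi L₀-spline on ρ with σ^B(r_j) = ν_j for all j. If f ∈ Λ₀ satisfies f(r_j) = ν_j for all j ∈ {1,…,n} and f ≠ σ^B, then ‖σ^B‖₀ < ‖f‖₀. -/

import Mathlib

open MeasureTheory Set Filter

noncomputable section

/-- The radial Beppo Levi energy space `Λ₀`: functions `f : (0,∞) → ℂ` of class `C¹`
whose derivative `f′` is locally absolutely continuous on compact subintervals of `(0,∞)`
(encoded by the fundamental theorem of calculus with an integrable density `f″`),
and whose radial Beppo Levi energy `∫₀^∞ ( r·|f″(r)|² + (1/r)·|f′(r)|² ) dr` is finite. -/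
structure Lambda0 where
  f : ℝ → ℂ
  f' : ℝ → ℂ
  f'' : ℝ → ℂ
  hasDeriv : ∀ r ∈ Set.Ioi (0:ℝ), HasDerivAt f (f' r) r
  contDeriv : ContinuousOn f' (Set.Ioi 0)
  locAC : ∀ a b : ℝ, 0 < a → a ≤ b →
    MeasureTheory.IntegrableOn f'' (Set.Icc a b) ∧
      ∀ x ∈ Set.Icc a b, f' x = f' a + ∫ t in a..x, f'' t
  energyFin : MeasureTheory.IntegrableOn
    (fun r : ℝ => r * ‖f'' r‖ ^ 2 + (1 / r) * ‖f' r‖ ^ 2) (Set.Ioi 0)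

/-- The squared radial Beppo Levi energy `‖·‖₀²` of a function with first derivative `g'`
and second derivative `g''`. -/
def energySq (g' g'' : ℝ → ℂ) : ℝ :=
  ∫ r in Set.Ioi (0:ℝ), (r * ‖g'' r‖ ^ 2 + (1 / r) * ‖g' r‖ ^ 2)

/-- The seminorm `‖f‖₀`. -/
def Lambda0.seminorm0 (F : Lambda0) : ℝ :=
  Real.sqrt (energySq F.f' F.f'')

/-- The semi-inner product `⟨f,g⟩₀`. -/
def innerBL (F G : Lambda0) : ℂ :=
  ∫ r in Set.Ioi (0:ℝ),
    ((r : ℂ) * F.f'' r * (starRingEnd ℂ) (G.f'' r) +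
      (1 / (r : ℂ)) * F.f' r * (starRingEnd ℂ) (G.f' r))

/-- A Beppo Levi `L₀`-spline on the positive knots `r 1 < r 2 < … < r n`:
piecewise of the form `a·x² + b·x²·ln x + c + d·ln x` between consecutive knots,
of the form `a·x² + b·x²·ln x + c` on `(0, r 1)`, of the form `c + d·ln x` on `(r n, ∞)`,
`C²` throughout `(0,∞)`, and continuously extended at `0`. -/
structure IsBLSpline (n : ℕ) (r : ℕ → ℝ) (η : ℝ → ℂ) : Prop where
  pieces : ∀ j : ℕ, 1 ≤ j → j + 1 ≤ n → ∃ a b c d : ℂ,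
    ∀ x ∈ Set.Ioo (r j) (r (j + 1)),
      η x = a * (x : ℂ) ^ 2 + b * (x : ℂ) ^ 2 * (Real.log x : ℂ) + c + d * (Real.log x : ℂ)
  left : ∃ a b c : ℂ, ∀ x ∈ Set.Ioo (0 : ℝ) (r 1),
      η x = a * (x : ℂ) ^ 2 + b * (x : ℂ) ^ 2 * (Real.log x : ℂ) + c
  right : ∃ c d : ℂ, ∀ x ∈ Set.Ioi (r n), η x = c + d * (Real.log x : ℂ)
  smooth : ContDiffOn ℝ 2 η (Set.Ioi 0)
  cont0 : ContinuousWithinAt η (Set.Ici 0) 0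

/-- A Beppo Levi `L₀`-spline is non-singular if on `(0, r₁)` it has the form `a·x² + c`. -/
def NonSingularBLS (r1 : ℝ) (η : ℝ → ℂ) : Prop :=
  ∃ a c : ℂ, ∀ x ∈ Set.Ioo (0 : ℝ) r1, η x = a * (x : ℂ) ^ 2 + c

/-- Rabut's kernel `K`. -/
def Kfun (r t : ℝ) : ℝ :=
  if r ≤ t then 0 else (1 / 4) * (t ^ 2 - r ^ 2 + (r ^ 2 + t ^ 2) * Real.log (r / t))

/-- The limiting kernel `H_{0,∞}` (with left endpoint knot `r1`). -/
def Hfun (r1 r t : ℝ) : ℝ :=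
  Kfun r t - Kfun r r1 - Kfun r1 t + (1 / 4) * (r ^ 2 - r1 ^ 2) * Real.log (t / r1)

/-- The basis function `φ₀`. -/
def phi0 (r : ℝ) : ℝ :=
  if r ≤ 1 then r ^ 2 - r ^ 2 * Real.log r else 1 + Real.log r

/-- Johnson's compactly supported profile `η₂`. -/
def eta2 (x : ℝ) : ℂ :=
  (((4 / 3 : ℝ) * (Real.log 2 - phi0 x + phi0 (x / 2)) : ℝ) : ℂ)

/-- The non-singular compactly supported profile `β`. -/
def betaFn (x : ℝ) : ℂ :=
  (((1 / 5 : ℝ) * (27 * Real.log 3 - 32 * Real.log 2 + 5 * phi0 x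
      - 32 * phi0 (x / 2) + 27 * phi0 (x / 3)) : ℝ) : ℂ)

/-- `Ker L₀ = span{r², r² ln r, 1, ln r}`, as functions on `(0,∞)`. -/
def KerL0 : Set (ℝ → ℂ) :=
  {η | ∃ a b c d : ℂ, ∀ x : ℝ, 0 < x →
    η x = a * (x : ℂ) ^ 2 + b * (x : ℂ) ^ 2 * (Real.log x : ℂ) + c + d * (Real.log x : ℂ)}

/-- `α(h) = inf_{η ∈ Ker L₀} sup_{t ∈ [0,1]} |t^μ − η(1+th)|`. -/
def alphaFn (μ h : ℝ) : ℝ :=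
  sInf {v : ℝ | ∃ η ∈ KerL0,
    v = sSup ((fun t : ℝ => ‖((t ^ μ : ℝ) : ℂ) - η (1 + t * h)‖) '' Set.Icc (0 : ℝ) 1)}

/-!
The non-singular spline `S` is the orthogonal projection for the energy: `⟨S, G⟩₀ = 0` for every
`G ∈ Λ₀` that vanishes at the knots. On each piece `L₀ S = 0` integrates once to
`(r S'')' = S'/r + const`, so the integral of `r S'' conj G'' + S' conj G' / r` over a piece is the
increment of `r S'' conj G'` minus `const` times the increment of `conj G`. The latter vanishes
between knots, and the former telescopes since `S` is `C²`. The two outer boundary values are limits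
of `r S'' conj G'`, where `G'` is bounded because `|G'|²` varies by at most the energy of `G`. They
vanish: `r S'' = 2 a r → 0` as `r → 0`, by non-singularity, and `r S'' = -d / r → 0` as `r → ∞`.

Pythagoras with `G = F - S` gives `‖F‖₀² = ‖S‖₀² + ‖F - S‖₀²`. The last term is positive, since a
function of zero energy is constant and `F - S` vanishes at the first knot.
-/

section AbsoluteContinuity

variable {E : Type*} [NormedAddCommGroup E] [NormedSpace ℝ E] {a b : ℝ} {f f' : ℝ → E}

theorem absolutelyContinuousOnInterval_of_dist_le {X Y : Type*} [PseudoMetricSpace X]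
    [PseudoMetricSpace Y] {g : ℝ → X} {h : ℝ → Y} (hh : AbsolutelyContinuousOnInterval h a b)
    (hgh : ∀ x ∈ uIcc a b, ∀ y ∈ uIcc a b, dist (g x) (g y) ≤ dist (h x) (h y)) :
    AbsolutelyContinuousOnInterval g a b := by
  refine squeeze_zero' (.of_forall fun I => Finset.sum_nonneg fun i _ => dist_nonneg) ?_ hh
  filter_upwards [mem_inf_of_right (mem_principal_self _)] with I hI
  exact Finset.sum_le_sum fun i hi => hgh _ (hI.1 i hi).1 _ (hI.1 i hi).2

theorem absolutelyContinuousOnInterval_integral (hf' : IntervalIntegrable f' volume a b) :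
    AbsolutelyContinuousOnInterval (fun x => ∫ t in a..x, f' t) a b := by
  refine absolutelyContinuousOnInterval_of_dist_le
    (hf'.norm.absolutelyContinuousOnInterval_intervalIntegral left_mem_uIcc) fun x hx y hy => ?_
  have hsub {z : ℝ} (hz : z ∈ uIcc a b) : uIcc a z ⊆ uIcc a b := uIcc_subset_uIcc_left hz
  rw [dist_eq_norm, dist_eq_norm,
    intervalIntegral.integral_interval_sub_left (hf'.mono_set (hsub hx)) (hf'.mono_set (hsub hy)),
    intervalIntegral.integral_interval_sub_left (hf'.norm.mono_set (hsub hx))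
      (hf'.norm.mono_set (hsub hy))]
  exact intervalIntegral.norm_integral_le_abs_integral_norm

theorem integral_eq_sub_of_ae_hasDerivAt [CompleteSpace E]
    (hf : AbsolutelyContinuousOnInterval f a b) (hf' : IntervalIntegrable f' volume a b)
    (hderiv : ∀ᵐ x, x ∈ uIcc a b → HasDerivAt f (f' x) x) :
    ∫ x in a..b, f' x = f b - f a := by
  obtain ⟨C, hC⟩ : ∃ C, ∀ x ∈ uIcc a b, (f x - ∫ t in a..x, f' t) = C := by
    refine (hf.fun_sub (absolutelyContinuousOnInterval_integral hf')).const_of_ae_hasDerivAt_zero ?_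
    filter_upwards [hderiv, hf'.ae_hasDerivAt_integral] with x hfx hIx hx
    simpa only [sub_self] using (hfx hx).fun_sub (hIx hx a left_mem_uIcc)
  have hab : f b - ∫ t in a..b, f' t = f a := by
    simpa using (hC b right_mem_uIcc).trans (hC a left_mem_uIcc).symm
  rw [← hab, sub_sub_cancel]

/-- `f` is an indefinite integral of `f'` on `[a, b]`. This is the form in which `Lambda0` encodes
the absolute continuity of the derivative; the density `f'` is determined only almost everywhere. -/
structure IsIndefIntegralOn (f f' : ℝ → E) (a b : ℝ) : Prop where
  intervalIntegrable : IntervalIntegrable f' volume a b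
  eq_add_integral : ∀ x ∈ uIcc a b, f x = f a + ∫ t in a..x, f' t

namespace IsIndefIntegralOn

theorem of_hasDerivAt [CompleteSpace E] (hab : a ≤ b) (hf : ContinuousOn f (Icc a b))
    (hderiv : ∀ x ∈ Ioo a b, HasDerivAt f (f' x) x) (hf' : IntervalIntegrable f' volume a b) :
    IsIndefIntegralOn f f' a b where
  intervalIntegrable := hf'
  eq_add_integral x hx := by
    have hle : a ≤ x := (uIcc_of_le hab ▸ hx).1
    have hxb : x ≤ b := (uIcc_of_le hab ▸ hx).2
    rw [intervalIntegral.integral_eq_sub_of_hasDerivAt_of_le hle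
      (hf.mono (Icc_subset_Icc_right hxb)) (fun y hy => hderiv y (Ioo_subset_Ioo_right hxb hy))
      (hf'.mono_set (uIcc_subset_uIcc_left hx)), add_sub_cancel]

theorem absolutelyContinuousOnInterval (hf : IsIndefIntegralOn f f' a b) :
    AbsolutelyContinuousOnInterval f a b :=
  absolutelyContinuousOnInterval_of_dist_le
    (absolutelyContinuousOnInterval_integral hf.intervalIntegrable) fun x hx y hy => by
      rw [hf.eq_add_integral x hx, hf.eq_add_integral y hy, dist_add_left]

theorem ae_hasDerivAt [CompleteSpace E] (hf : IsIndefIntegralOn f f' a b) :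
    ∀ᵐ x, x ∈ uIcc a b → HasDerivAt f (f' x) x := by
  filter_upwards [hf.intervalIntegrable.ae_hasDerivAt_integral,
    (Ioo_ae_eq_Icc (μ := volume) (a := min a b) (b := max a b)).mem_iff] with x hderiv hIoo hx
  refine ((hderiv hx a left_mem_uIcc).const_add (f a)).congr_of_eventuallyEq ?_
  filter_upwards [isOpen_Ioo.mem_nhds (hIoo.2 hx)] with y hy
  exact hf.eq_add_integral y (Ioo_subset_Icc_self hy)

theorem clm_comp {F : Type*} [NormedAddCommGroup F] [NormedSpace ℝ F] [CompleteSpace E]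
    [CompleteSpace F] (L : E →L[ℝ] F) (hf : IsIndefIntegralOn f f' a b) :
    IsIndefIntegralOn (fun x => L (f x)) (fun x => L (f' x)) a b where
  intervalIntegrable :=
    ⟨L.integrable_comp hf.intervalIntegrable.1, L.integrable_comp hf.intervalIntegrable.2⟩
  eq_add_integral x hx := by
    rw [L.intervalIntegral_comp_comm
      (hf.intervalIntegrable.mono_set (uIcc_subset_uIcc_left hx)), ← map_add,
      ← hf.eq_add_integral x hx]

section Mul

variable {A : Type*} [NormedDivisionRing A] [NormedAlgebra ℝ A] {u u' v v' : ℝ → A}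

theorem intervalIntegrable_deriv_mul (hu : IsIndefIntegralOn u u' a b)
    (hv : IsIndefIntegralOn v v' a b) :
    IntervalIntegrable (fun x => u' x * v x + u x * v' x) volume a b :=
  (hu.intervalIntegrable.mul_continuousOn hv.absolutelyContinuousOnInterval.continuousOn).add
    (hv.intervalIntegrable.continuousOn_mul hu.absolutelyContinuousOnInterval.continuousOn)

theorem integral_deriv_mul_eq_sub [CompleteSpace A] (hu : IsIndefIntegralOn u u' a b)
    (hv : IsIndefIntegralOn v v' a b) :
    ∫ x in a..b, (u' x * v x + u x * v' x) = u b * v b - u a * v a := by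
  refine integral_eq_sub_of_ae_hasDerivAt (f := fun x => u x * v x)
    (hu.absolutelyContinuousOnInterval.fun_smul hv.absolutelyContinuousOnInterval)
    (hu.intervalIntegrable_deriv_mul hv) ?_
  filter_upwards [hu.ae_hasDerivAt, hv.ae_hasDerivAt] with x hux hvx hx
  exact (hux hx).mul (hvx hx)

end Mul

end IsIndefIntegralOn

end AbsoluteContinuity

section EnergySpace

open scoped ComplexConjugate

namespace Lambda0

variable (F G : Lambda0) {a b : ℝ}

/-- The integrand of the squared energy `‖F‖₀²`. -/
def energyDensity (r : ℝ) : ℝ := r * ‖F.f'' r‖ ^ 2 + (1 / r) * ‖F.f' r‖ ^ 2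

/-- The integrand of the semi-inner product `⟨F, G⟩₀`. -/
def innerDensity (r : ℝ) : ℂ :=
  (r : ℂ) * F.f'' r * conj (G.f'' r) + (1 / (r : ℂ)) * F.f' r * conj (G.f' r)

theorem isIndefIntegralOn (ha : 0 < a) (hab : a ≤ b) : IsIndefIntegralOn F.f' F.f'' a b where
  intervalIntegrable := (intervalIntegrable_iff_integrableOn_Icc_of_le hab).2 (F.locAC a b ha hab).1
  eq_add_integral := uIcc_of_le hab ▸ (F.locAC a b ha hab).2

theorem isIndefIntegralOn_conj (ha : 0 < a) (hab : a ≤ b) :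
    IsIndefIntegralOn (fun r => conj (F.f' r)) (fun r => conj (F.f'' r)) a b :=
  (F.isIndefIntegralOn ha hab).clm_comp Complex.conjCLE.toContinuousLinearMap

theorem aestronglyMeasurable_f'' : AEStronglyMeasurable F.f'' (volume.restrict (Ioi 0)) := by
  refine LocallyIntegrableOn.aestronglyMeasurable fun x hx => ?_
  have hx : 0 < x := hx
  exact ⟨Icc (x / 2) (2 * x), mem_nhdsWithin_of_mem_nhds (Icc_mem_nhds (by linarith) (by linarith)),
    (F.locAC _ _ (by positivity) (by linarith)).1⟩

theorem aestronglyMeasurable_f' : AEStronglyMeasurable F.f' (volume.restrict (Ioi 0)) :=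
  F.contDeriv.aestronglyMeasurable measurableSet_Ioi

theorem energyDensity_nonneg {r : ℝ} (hr : 0 ≤ r) : 0 ≤ F.energyDensity r := by
  unfold energyDensity
  positivity

theorem aestronglyMeasurable_innerDensity :
    AEStronglyMeasurable (F.innerDensity G) (volume.restrict (Ioi 0)) := by
  have conj_comp {g : ℝ → ℂ} (hg : AEStronglyMeasurable g (volume.restrict (Ioi 0))) :
      AEStronglyMeasurable (fun r => conj (g r)) (volume.restrict (Ioi 0)) :=
    Complex.continuous_conj.comp_aestronglyMeasurable hg
  have hid : AEStronglyMeasurable (fun r : ℝ => (r : ℂ)) (volume.restrict (Ioi 0)) := by fun_prop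
  have hinv : AEStronglyMeasurable (fun r : ℝ => 1 / (r : ℂ)) (volume.restrict (Ioi 0)) :=
    (Measurable.const_div (by fun_prop) 1).aestronglyMeasurable
  exact ((hid.mul F.aestronglyMeasurable_f'').mul (conj_comp G.aestronglyMeasurable_f'')).add
    ((hinv.mul F.aestronglyMeasurable_f').mul (conj_comp G.aestronglyMeasurable_f'))

theorem energySq_nonneg : 0 ≤ energySq F.f' F.f'' :=
  setIntegral_nonneg measurableSet_Ioi fun _ hr => F.energyDensity_nonneg (le_of_lt hr)

theorem integrableOn_energyDensity : IntegrableOn F.energyDensity (Ioi 0) := F.energyFin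

theorem integrableOn_energyDensity_sub :
    IntegrableOn (fun r => r * ‖F.f'' r - G.f'' r‖ ^ 2 + (1 / r) * ‖F.f' r - G.f' r‖ ^ 2)
      (Ioi 0) := by
  have hid : AEStronglyMeasurable (fun r : ℝ => r) (volume.restrict (Ioi 0)) := by fun_prop
  have hinv : AEStronglyMeasurable (fun r : ℝ => 1 / r) (volume.restrict (Ioi 0)) :=
    (Measurable.const_div (by fun_prop) 1).aestronglyMeasurable
  have norm_sub_sq_le (z w : ℂ) : ‖z - w‖ ^ 2 ≤ 2 * (‖z‖ ^ 2 + ‖w‖ ^ 2) := by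
    linarith [parallelogram_law_with_norm ℝ z w, sq_nonneg ‖z + w‖]
  refine ((F.integrableOn_energyDensity.add G.integrableOn_energyDensity).const_mul 2).mono'
    ((hid.mul ((F.aestronglyMeasurable_f''.sub G.aestronglyMeasurable_f'').norm.pow 2)).add
      (hinv.mul ((F.aestronglyMeasurable_f'.sub G.aestronglyMeasurable_f').norm.pow 2))) ?_
  filter_upwards [ae_restrict_mem measurableSet_Ioi] with r hr
  have hr : 0 < r := hr
  rw [Real.norm_of_nonneg (by positivity)]
  calc r * ‖F.f'' r - G.f'' r‖ ^ 2 + (1 / r) * ‖F.f' r - G.f' r‖ ^ 2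
      ≤ r * (2 * (‖F.f'' r‖ ^ 2 + ‖G.f'' r‖ ^ 2)) +
          (1 / r) * (2 * (‖F.f' r‖ ^ 2 + ‖G.f' r‖ ^ 2)) := by
        gcongr <;> exact norm_sub_sq_le _ _
    _ = 2 * (F.energyDensity r + G.energyDensity r) := by
        unfold energyDensity
        ring

instance : Sub Lambda0 where
  sub F G :=
    { f := fun r => F.f r - G.f r
      f' := fun r => F.f' r - G.f' r
      f'' := fun r => F.f'' r - G.f'' r
      hasDeriv := fun r hr => (F.hasDeriv r hr).sub (G.hasDeriv r hr)
      contDeriv := F.contDeriv.sub G.contDeriv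
      locAC := fun a b ha hab => by
        refine ⟨(F.locAC a b ha hab).1.sub (G.locAC a b ha hab).1, fun x hx => ?_⟩
        rw [(F.locAC a b ha hab).2 x hx, (G.locAC a b ha hab).2 x hx,
          intervalIntegral.integral_sub (F.isIndefIntegralOn ha hx.1).intervalIntegrable
            (G.isIndefIntegralOn ha hx.1).intervalIntegrable]
        ring
      energyFin := F.integrableOn_energyDensity_sub G }

@[simp] theorem sub_f (r : ℝ) : (F - G).f r = F.f r - G.f r := rfl

@[simp] theorem sub_f' (r : ℝ) : (F - G).f' r = F.f' r - G.f' r := rfl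

@[simp] theorem sub_f'' (r : ℝ) : (F - G).f'' r = F.f'' r - G.f'' r := rfl

theorem norm_innerDensity_le {r : ℝ} (hr : 0 < r) :
    ‖F.innerDensity G r‖ ≤ F.energyDensity r + G.energyDensity r := by
  have mul_le_sq_add_sq (x y : ℝ) : x * y ≤ x ^ 2 + y ^ 2 := by
    nlinarith [two_mul_le_add_sq x y]
  calc ‖F.innerDensity G r‖
      ≤ r * (‖F.f'' r‖ * ‖G.f'' r‖) + (1 / r) * (‖F.f' r‖ * ‖G.f' r‖) := by
        refine (norm_add_le _ _).trans_eq ?_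
        simp only [norm_mul, norm_div, norm_one, RCLike.norm_conj, Complex.norm_of_nonneg hr.le,
          mul_assoc]
    _ ≤ r * (‖F.f'' r‖ ^ 2 + ‖G.f'' r‖ ^ 2) + (1 / r) * (‖F.f' r‖ ^ 2 + ‖G.f' r‖ ^ 2) := by
        gcongr <;> exact mul_le_sq_add_sq _ _
    _ = F.energyDensity r + G.energyDensity r := by
        unfold energyDensity
        ring

theorem integrableOn_innerDensity : IntegrableOn (F.innerDensity G) (Ioi 0) := by
  refine (F.integrableOn_energyDensity.add G.integrableOn_energyDensity).mono'
    (F.aestronglyMeasurable_innerDensity G) ?_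
  filter_upwards [ae_restrict_mem measurableSet_Ioi] with r hr using F.norm_innerDensity_le G hr

theorem energyDensity_eq_add_sub (r : ℝ) :
    F.energyDensity r =
      G.energyDensity r + (F - G).energyDensity r + 2 * (G.innerDensity (F - G) r).re := by
  have norm_sq_eq (z w : ℂ) : ‖z‖ ^ 2 = ‖w‖ ^ 2 + ‖z - w‖ ^ 2 + 2 * (w * conj (z - w)).re := by
    simp only [Complex.sq_norm, Complex.normSq_apply, Complex.mul_re, Complex.conj_re,
      Complex.conj_im, Complex.sub_re, Complex.sub_im]
    ring
  have hre : (G.innerDensity (F - G) r).re =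
      r * (G.f'' r * conj (F.f'' r - G.f'' r)).re +
        (1 / r) * (G.f' r * conj (F.f' r - G.f' r)).re := by
    simp only [innerDensity, sub_f', sub_f'', mul_assoc, Complex.add_re, Complex.re_ofReal_mul,
      ← Complex.ofReal_one, ← Complex.ofReal_div]
  rw [hre]
  simp only [energyDensity, sub_f', sub_f'']
  rw [norm_sq_eq (F.f'' r) (G.f'' r), norm_sq_eq (F.f' r) (G.f' r)]
  ring

theorem energySq_eq_add_sub :
    energySq F.f' F.f'' =
      energySq G.f' G.f'' + energySq (F - G).f' (F - G).f'' + 2 * (innerBL G (F - G)).re := by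
  have hinner := G.integrableOn_innerDensity (F - G)
  have hre : IntegrableOn (fun r => 2 * (G.innerDensity (F - G) r).re) (Ioi 0) :=
    hinner.re.const_mul 2
  have hadd : IntegrableOn (fun r => G.energyDensity r + (F - G).energyDensity r) (Ioi 0) :=
    G.integrableOn_energyDensity.add (F - G).integrableOn_energyDensity
  calc energySq F.f' F.f''
      = ∫ r in Ioi 0,
          (G.energyDensity r + (F - G).energyDensity r + 2 * (G.innerDensity (F - G) r).re) :=
        integral_congr_ae (.of_forall (F.energyDensity_eq_add_sub G))
    _ = (∫ r in Ioi 0, G.energyDensity r) + (∫ r in Ioi 0, (F - G).energyDensity r) +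
          2 * ∫ r in Ioi 0, (G.innerDensity (F - G) r).re := by
        rw [integral_add hadd hre, integral_add G.integrableOn_energyDensity
          (F - G).integrableOn_energyDensity, integral_const_mul]
    _ = _ := congrArg (_ + 2 * ·) (integral_re hinner)

theorem abs_norm_sq_f'_sub_le (ha : 0 < a) (hab : a ≤ b) :
    |‖F.f' b‖ ^ 2 - ‖F.f' a‖ ^ 2| ≤ energySq F.f' F.f'' := by
  have hF : IsIndefIntegralOn F.f' F.f'' a b := F.isIndefIntegralOn ha hab
  have hsub : Ioc a b ⊆ Ioi 0 := fun x hx => ha.trans hx.1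
  have integral_eq : ∫ x in a..b, (F.f'' x * conj (F.f' x) + F.f' x * conj (F.f'' x)) =
      ((‖F.f' b‖ ^ 2 - ‖F.f' a‖ ^ 2 : ℝ) : ℂ) := by
    rw [hF.integral_deriv_mul_eq_sub (F.isIndefIntegralOn_conj ha hab)]
    simp [Complex.mul_conj']
  have norm_le {r : ℝ} (hr : 0 < r) :
      ‖F.f'' r * conj (F.f' r) + F.f' r * conj (F.f'' r)‖ ≤ F.energyDensity r := by
    calc _ ≤ 2 * ‖F.f'' r‖ * ‖F.f' r‖ := by
          refine (norm_add_le _ _).trans_eq ?_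
          simp only [norm_mul, RCLike.norm_conj]
          ring
      _ ≤ F.energyDensity r := by
          have hsq : F.energyDensity r - 2 * ‖F.f'' r‖ * ‖F.f' r‖ =
              1 / r * (r * ‖F.f'' r‖ - ‖F.f' r‖) ^ 2 := by
            unfold energyDensity
            field_simp
            ring
          rw [← sub_nonneg, hsq]
          positivity
  calc |‖F.f' b‖ ^ 2 - ‖F.f' a‖ ^ 2|
      = ‖∫ x in a..b, (F.f'' x * conj (F.f' x) + F.f' x * conj (F.f'' x))‖ := by
        rw [integral_eq, Complex.norm_real, Real.norm_eq_abs]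
    _ ≤ ∫ x in a..b, F.energyDensity x :=
        intervalIntegral.norm_integral_le_of_norm_le hab
          (.of_forall fun r hr => norm_le (hsub hr))
          ((intervalIntegrable_iff_integrableOn_Ioc_of_le hab).2
            (F.integrableOn_energyDensity.mono_set hsub))
    _ = ∫ x in Ioc a b, F.energyDensity x := intervalIntegral.integral_of_le hab
    _ ≤ energySq F.f' F.f'' := by
        refine setIntegral_mono_set F.integrableOn_energyDensity ?_ hsub.eventuallyLE
        filter_upwards [ae_restrict_mem measurableSet_Ioi] with r hr
          using F.energyDensity_nonneg (le_of_lt hr)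

theorem exists_norm_f'_le : ∃ M, ∀ x > 0, ‖F.f' x‖ ≤ M := by
  refine ⟨√(energySq F.f' F.f'' + ‖F.f' 1‖ ^ 2), fun x hx => Real.le_sqrt_of_sq_le ?_⟩
  rcases le_total x 1 with h | h
  · linarith [abs_le.1 (F.abs_norm_sq_f'_sub_le hx h)]
  · linarith [abs_le.1 (F.abs_norm_sq_f'_sub_le one_pos h)]

theorem f_eq_of_energySq_eq_zero (h : energySq F.f' F.f'' = 0) {x y : ℝ} (hx : 0 < x)
    (hy : 0 < y) : F.f x = F.f y := by
  have density_zero : F.energyDensity =ᵐ[volume.restrict (Ioi 0)] 0 := by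
    refine (integral_eq_zero_iff_of_nonneg_ae ?_ F.integrableOn_energyDensity).1 h
    filter_upwards [ae_restrict_mem measurableSet_Ioi] with r hr
      using F.energyDensity_nonneg (le_of_lt hr)
  have f'_ae_zero : F.f' =ᵐ[volume.restrict (Ioi 0)] fun _ => 0 := by
    filter_upwards [density_zero, ae_restrict_mem measurableSet_Ioi] with r h0 hr
    have hr : 0 < r := hr
    have hterm : 1 / r * ‖F.f' r‖ ^ 2 = 0 :=
      ((add_eq_zero_iff_of_nonneg (by positivity) (by positivity)).1 h0).2
    simpa [hr.ne'] using hterm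
  have f'_zero : EqOn F.f' (fun _ => 0) (Ioi 0) :=
    Measure.eqOn_open_of_ae_eq f'_ae_zero isOpen_Ioi F.contDeriv continuousOn_const
  refine isOpen_Ioi.is_const_of_deriv_eq_zero (convex_Ioi 0).isPreconnected
    (fun z hz => (F.hasDeriv z hz).differentiableAt.differentiableWithinAt) (fun z hz => ?_) hx hy
  rw [(F.hasDeriv z hz).deriv, f'_zero hz, Pi.zero_apply]

end Lambda0

end EnergySpace

section KernelPieces

/-- The general element `a x² + b x² ln x + c + d ln x` of `Ker L₀`, of which every piece of a
Beppo Levi `L₀`-spline is an instance. -/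
def kerL0Fun (a b c d : ℂ) (x : ℝ) : ℂ :=
  a * (x : ℂ) ^ 2 + b * (x : ℂ) ^ 2 * (Real.log x : ℂ) + c + d * (Real.log x : ℂ)

variable (a b c d : ℂ) {x : ℝ}

theorem hasDerivAt_kerL0Fun (hx : x ≠ 0) :
    HasDerivAt (kerL0Fun a b c d) (2 * a * x + b * (2 * x * Real.log x + x) + d / x) x := by
  have hid : HasDerivAt (fun y : ℝ => (y : ℂ)) 1 x := (hasDerivAt_id x).ofReal_comp
  have hlog := (Real.hasDerivAt_log hx).ofReal_comp
  refine (((((hid.fun_pow 2).const_mul a).add (((hid.fun_pow 2).const_mul b).mul hlog)).add_const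
    c).add (hlog.const_mul d)).congr_deriv ?_
  push_cast
  field_simp

theorem hasDerivAt_deriv_kerL0Fun (hx : x ≠ 0) :
    HasDerivAt (fun y : ℝ => 2 * a * y + b * (2 * y * Real.log y + y) + d / y)
      (2 * a + b * (2 * Real.log x + 3) - d / (x : ℂ) ^ 2) x := by
  have hx' : (x : ℂ) ≠ 0 := Complex.ofReal_ne_zero.2 hx
  have hid : HasDerivAt (fun y : ℝ => (y : ℂ)) 1 x := (hasDerivAt_id x).ofReal_comp
  have hlog := (Real.hasDerivAt_log hx).ofReal_comp
  refine (((hid.const_mul (2 * a)).add ((((hid.const_mul 2).mul hlog).add hid).const_mul b)).add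
    ((hasDerivAt_const x d).div hid hx')).congr_deriv ?_
  push_cast
  field_simp
  ring

theorem hasDerivAt_moment_kerL0Fun (hx : x ≠ 0) :
    HasDerivAt (fun y : ℝ => 2 * a * y + b * (2 * y * Real.log y + 3 * y) - d / y)
      ((2 * a * x + b * (2 * x * Real.log x + x) + d / x) / x + 4 * b) x := by
  have hx' : (x : ℂ) ≠ 0 := Complex.ofReal_ne_zero.2 hx
  have hid : HasDerivAt (fun y : ℝ => (y : ℂ)) 1 x := (hasDerivAt_id x).ofReal_comp
  have hlog := (Real.hasDerivAt_log hx).ofReal_comp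
  refine (((hid.const_mul (2 * a)).add ((((hid.const_mul 2).mul hlog).add
    (hid.const_mul 3)).const_mul b)).sub ((hasDerivAt_const x d).div hid hx')).congr_deriv ?_
  push_cast
  field_simp
  ring

end KernelPieces

section Green

open scoped ComplexConjugate Topology

namespace Lambda0

variable {S : Lambda0} {U : Set ℝ} {a b c d : ℂ} {α β x : ℝ}

/-- The radial moment `r ↦ r S''(r)`, the boundary term of Green's formula for the energy. It is
expressed by `deriv S.f'` since `S.f''` has meaningful values only almost everywhere. -/
def moment (S : Lambda0) (r : ℝ) : ℂ := (r : ℂ) * deriv S.f' r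

theorem continuousOn_moment (hS : ContDiffOn ℝ 2 S.f (Ioi 0)) : ContinuousOn S.moment (Ioi 0) := by
  have contDiffOn_deriv : ContDiffOn ℝ 1 (deriv S.f) (Ioi 0) :=
    hS.deriv_of_isOpen isOpen_Ioi (by norm_num)
  have contDiffOn_f' : ContDiffOn ℝ 1 S.f' (Ioi 0) :=
    contDiffOn_deriv.congr fun r hr => (S.hasDeriv r hr).deriv.symm
  exact Complex.continuous_ofReal.continuousOn.mul
    (contDiffOn_f'.continuousOn_deriv_of_isOpen isOpen_Ioi le_rfl)

theorem f'_eq_of_eqOn_kerL0Fun (hU : IsOpen U) (hU0 : U ⊆ Ioi 0)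
    (hS : EqOn S.f (kerL0Fun a b c d) U) (hx : x ∈ U) :
    S.f' x = 2 * a * x + b * (2 * x * Real.log x + x) + d / x :=
  ((S.hasDeriv x (hU0 hx)).congr_of_eventuallyEq
    (hS.symm.eventuallyEq_of_mem (hU.mem_nhds hx))).unique
      (hasDerivAt_kerL0Fun a b c d (ne_of_gt (hU0 hx)))

theorem moment_eq_of_eqOn_kerL0Fun (hU : IsOpen U) (hU0 : U ⊆ Ioi 0)
    (hS : EqOn S.f (kerL0Fun a b c d) U) (hx : x ∈ U) :
    S.moment x = 2 * a * x + b * (2 * x * Real.log x + 3 * x) - d / x := by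
  have hx0 : x ≠ 0 := ne_of_gt (hU0 hx)
  have hx' : (x : ℂ) ≠ 0 := Complex.ofReal_ne_zero.2 hx0
  have f'_eq : S.f' =ᶠ[𝓝 x] fun y => 2 * a * y + b * (2 * y * Real.log y + y) + d / y :=
    eventuallyEq_of_mem (hU.mem_nhds hx) fun y hy => f'_eq_of_eqOn_kerL0Fun hU hU0 hS hy
  rw [moment, f'_eq.deriv_eq, (hasDerivAt_deriv_kerL0Fun a b d hx0).deriv]
  field_simp

/-- On a piece, `L₀ S = 0` integrates once to `(r S'')' = S'/r + const`. -/
theorem hasDerivAt_moment_of_eqOn_kerL0Fun (hU : IsOpen U) (hU0 : U ⊆ Ioi 0)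
    (hS : EqOn S.f (kerL0Fun a b c d) U) (hx : x ∈ U) :
    HasDerivAt S.moment (S.f' x / x + 4 * b) x := by
  rw [f'_eq_of_eqOn_kerL0Fun hU hU0 hS hx]
  exact (hasDerivAt_moment_kerL0Fun a b d (ne_of_gt (hU0 hx))).congr_of_eventuallyEq
    (eventuallyEq_of_mem (hU.mem_nhds hx) fun y hy => moment_eq_of_eqOn_kerL0Fun hU hU0 hS hy)

theorem intervalIntegrable_f'_div (S : Lambda0) (q : ℂ) (hα : 0 < α) (hαβ : α ≤ β) :
    IntervalIntegrable (fun x => S.f' x / x + q) volume α β := by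
  have hsub : Icc α β ⊆ Ioi 0 := fun x hx => hα.trans_le hx.1
  refine ContinuousOn.intervalIntegrable_of_Icc hαβ (((S.contDeriv.mono hsub).div
    Complex.continuous_ofReal.continuousOn fun x hx => ?_).add continuousOn_const)
  exact Complex.ofReal_ne_zero.2 (ne_of_gt (hsub hx))

theorem integral_conj_f' (G : Lambda0) (hα : 0 < α) (hαβ : α ≤ β) :
    ∫ r in α..β, conj (G.f' r) = conj (G.f β - G.f α) := by
  have hsub : uIcc α β ⊆ Ioi 0 := fun x hx => hα.trans_le (uIcc_of_le hαβ ▸ hx).1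
  rw [intervalIntegral.intervalIntegral_conj, intervalIntegral.integral_eq_sub_of_hasDerivAt
    (fun x hx => G.hasDeriv x (hsub hx)) (G.contDeriv.mono hsub).intervalIntegrable]

theorem integral_innerDensity_of_eqOn_kerL0Fun (G : Lambda0) (hα : 0 < α) (hαβ : α ≤ β)
    (hcont : ContinuousOn S.moment (Ioi 0)) (hS : EqOn S.f (kerL0Fun a b c d) (Ioo α β)) :
    ∫ r in α..β, S.innerDensity G r =
      S.moment β * conj (G.f' β) - S.moment α * conj (G.f' α) - 4 * b * conj (G.f β - G.f α) := by
  have hsub : Icc α β ⊆ Ioi 0 := fun x hx => hα.trans_le hx.1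
  have moment_indef : IsIndefIntegralOn S.moment (fun x => S.f' x / x + 4 * b) α β :=
    .of_hasDerivAt hαβ (hcont.mono hsub)
      (fun x hx => hasDerivAt_moment_of_eqOn_kerL0Fun isOpen_Ioo
        (Ioo_subset_Icc_self.trans hsub) hS hx)
      (S.intervalIntegrable_f'_div _ hα hαβ)
  have conj_f'_indef := G.isIndefIntegralOn_conj hα hαβ
  have conj_f'_integrable : IntervalIntegrable (fun r => conj (G.f' r)) volume α β :=
    conj_f'_indef.absolutelyContinuousOnInterval.continuousOn.intervalIntegrable
  calc ∫ r in α..β, S.innerDensity G r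
      = ∫ r in α..β, (((S.f' r / r + 4 * b) * conj (G.f' r) + S.moment r * conj (G.f'' r)) -
          4 * b * conj (G.f' r)) := by
        refine intervalIntegral.integral_congr_ae ?_
        filter_upwards [(S.isIndefIntegralOn hα hαβ).ae_hasDerivAt] with r hr hrI
        rw [innerDensity, moment, (hr (uIoc_subset_uIcc hrI)).deriv]
        ring
    _ = _ := by
        rw [intervalIntegral.integral_sub
            (moment_indef.intervalIntegrable_deriv_mul conj_f'_indef)
            (conj_f'_integrable.const_mul _),
          moment_indef.integral_deriv_mul_eq_sub conj_f'_indef,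
          intervalIntegral.integral_const_mul, G.integral_conj_f' hα hαβ]

theorem tendsto_moment_mul_conj_f' (G : Lambda0) {l : Filter ℝ} (hl : ∀ᶠ x in l, 0 < x)
    (hS : Tendsto S.moment l (𝓝 0)) :
    Tendsto (fun x => S.moment x * conj (G.f' x)) l (𝓝 0) := by
  obtain ⟨M, hM⟩ := G.exists_norm_f'_le
  refine hS.zero_mul_isBoundedUnder_le (isBoundedUnder_of_eventually_le (a := M) ?_)
  filter_upwards [hl] with x hx
  simpa using hM x hx

theorem integral_innerDensity_of_eqOn_Ioo_zero (G : Lambda0) (hβ : 0 < β)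
    (hcont : ContinuousOn S.moment (Ioi 0)) (hS : EqOn S.f (kerL0Fun a 0 c 0) (Ioo 0 β)) :
    ∫ r in 0..β, S.innerDensity G r = S.moment β * conj (G.f' β) := by
  have integral_eq : ∀ᶠ ε in 𝓝[>] 0, S.moment β * conj (G.f' β) - S.moment ε * conj (G.f' ε) =
      ∫ r in ε..β, S.innerDensity G r := by
    filter_upwards [Ioo_mem_nhdsGT hβ] with ε hε
    simp [integral_innerDensity_of_eqOn_kerL0Fun G hε.1 hε.2.le hcont
      (hS.mono (Ioo_subset_Ioo_left hε.1.le))]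
  have moment_tendsto : Tendsto S.moment (𝓝[>] 0) (𝓝 0) := by
    have hlin : Tendsto (fun x : ℝ => 2 * a * (x : ℂ)) (𝓝[>] 0) (𝓝 0) :=
      ((by fun_prop : Continuous fun x : ℝ => 2 * a * (x : ℂ)).tendsto' 0 0 (by simp)).mono_left
        nhdsWithin_le_nhds
    refine hlin.congr' ?_
    filter_upwards [Ioo_mem_nhdsGT hβ] with x hx
    simp [moment_eq_of_eqOn_kerL0Fun isOpen_Ioo Ioo_subset_Ioi_self hS hx]
  have boundary_tendsto := (tendsto_moment_mul_conj_f' G self_mem_nhdsWithin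
    moment_tendsto).const_sub (S.moment β * conj (G.f' β))
  have integral_tendsto : Tendsto (fun ε => ∫ r in ε..β, S.innerDensity G r) (𝓝[>] 0)
      (𝓝 (∫ r in 0..β, S.innerDensity G r)) := by
    have hint : IntegrableOn (S.innerDensity G) (uIcc 0 β) := by
      rw [uIcc_of_le hβ.le, integrableOn_Icc_iff_integrableOn_Ioc]
      exact (S.integrableOn_innerDensity G).mono_set Ioc_subset_Ioi_self
    refine (intervalIntegral.continuousOn_primitive_interval_left hint 0 left_mem_uIcc).mono_left
      (nhdsWithin_le_of_mem ?_)
    exact mem_of_superset (Ioo_mem_nhdsGT hβ) (uIcc_of_le hβ.le ▸ Ioo_subset_Icc_self)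
  rw [tendsto_nhds_unique integral_tendsto (boundary_tendsto.congr' integral_eq), sub_zero]

theorem integral_innerDensity_of_eqOn_Ioi (G : Lambda0) (hα : 0 < α)
    (hcont : ContinuousOn S.moment (Ioi 0)) (hS : EqOn S.f (kerL0Fun 0 0 c d) (Ioi α)) :
    ∫ r in Ioi α, S.innerDensity G r = -(S.moment α * conj (G.f' α)) := by
  have hsub : Ioi α ⊆ Ioi 0 := Ioi_subset_Ioi hα.le
  have integral_eq : ∀ᶠ R in atTop, S.moment R * conj (G.f' R) - S.moment α * conj (G.f' α) =
      ∫ r in α..R, S.innerDensity G r := by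
    filter_upwards [eventually_ge_atTop α] with R hR
    simp [integral_innerDensity_of_eqOn_kerL0Fun G hα hR hcont (hS.mono Ioo_subset_Ioi_self)]
  have moment_tendsto : Tendsto S.moment atTop (𝓝 0) := by
    have hinv : Tendsto (fun x : ℝ => -d * ((x⁻¹ : ℝ) : ℂ)) atTop (𝓝 0) := by
      simpa using (tendsto_inv_atTop_zero.ofReal).const_mul (-d)
    refine hinv.congr' ?_
    filter_upwards [Ioi_mem_atTop α] with x hx
    simp [moment_eq_of_eqOn_kerL0Fun isOpen_Ioi hsub hS hx, div_eq_mul_inv]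
  have boundary_tendsto := (tendsto_moment_mul_conj_f' G (eventually_gt_atTop 0)
    moment_tendsto).sub_const (S.moment α * conj (G.f' α))
  have integral_tendsto := intervalIntegral_tendsto_integral_Ioi α
    ((S.integrableOn_innerDensity G).mono_set hsub) tendsto_id
  rw [tendsto_nhds_unique integral_tendsto (boundary_tendsto.congr' integral_eq), zero_sub]

end Lambda0

end Green

section Spline

open scoped ComplexConjugate

theorem knots_pos {n : ℕ} {r : ℕ → ℝ} (hpos : 0 < r 1)
    (hmono : ∀ j, 1 ≤ j → j < n → r j < r (j + 1)) {j : ℕ} (hj : 1 ≤ j) (hjn : j ≤ n) :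
    0 < r j := by
  induction j, hj using Nat.le_induction with
  | base => exact hpos
  | succ j hj ih => exact (ih (by lia)).trans (hmono j hj hjn)

namespace IsBLSpline

variable {n : ℕ} {r : ℕ → ℝ} {S G : Lambda0}

theorem integral_innerDensity_knots (hS : IsBLSpline n r S.f) (hn : 1 ≤ n) (hpos : 0 < r 1)
    (hmono : ∀ j, 1 ≤ j → j < n → r j < r (j + 1)) (hG : ∀ j, 1 ≤ j → j ≤ n → G.f (r j) = 0) :
    ∫ x in r 1..r n, S.innerDensity G x =
      S.moment (r n) * conj (G.f' (r n)) - S.moment (r 1) * conj (G.f' (r 1)) := by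
  have piece {j : ℕ} (hj : j ∈ Finset.Ico 1 n) :
      ∫ x in r j..r (j + 1), S.innerDensity G x =
        S.moment (r (j + 1)) * conj (G.f' (r (j + 1))) - S.moment (r j) * conj (G.f' (r j)) := by
    obtain ⟨hj, hjn⟩ := Finset.mem_Ico.1 hj
    obtain ⟨a, b, c, d, hpiece⟩ := hS.pieces j hj hjn
    rw [Lambda0.integral_innerDensity_of_eqOn_kerL0Fun G (knots_pos hpos hmono hj hjn.le)
      (hmono j hj hjn).le (Lambda0.continuousOn_moment hS.smooth) hpiece,
      hG j hj hjn.le, hG (j + 1) (by lia) hjn]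
    simp
  have integrable (j : ℕ) (hj : j ∈ Ico 1 n) :
      IntervalIntegrable (S.innerDensity G) volume (r j) (r (j + 1)) := by
    have hle := (hmono j hj.1 hj.2).le
    exact (intervalIntegrable_iff_integrableOn_Ioc_of_le hle).2
      ((S.integrableOn_innerDensity G).mono_set fun x hx =>
        (knots_pos hpos hmono hj.1 hj.2.le).trans hx.1)
  rw [← intervalIntegral.sum_integral_adjacent_intervals_Ico hn integrable,
    Finset.sum_congr rfl fun j hj => piece hj,
    Finset.sum_Ico_sub (fun j => S.moment (r j) * conj (G.f' (r j))) hn]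

theorem innerBL_eq_zero (hS : IsBLSpline n r S.f) (hns : NonSingularBLS (r 1) S.f) (hn : 1 ≤ n)
    (hpos : 0 < r 1) (hmono : ∀ j, 1 ≤ j → j < n → r j < r (j + 1))
    (hG : ∀ j, 1 ≤ j → j ≤ n → G.f (r j) = 0) : innerBL S G = 0 := by
  have hcont := Lambda0.continuousOn_moment hS.smooth
  have hrn : 0 < r n := knots_pos hpos hmono hn le_rfl
  obtain ⟨a, c, hleft⟩ := hns
  obtain ⟨c', d, hright⟩ := hS.right
  have left := Lambda0.integral_innerDensity_of_eqOn_Ioo_zero G hpos hcont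
    (a := a) (c := c) fun x hx => by simpa [kerL0Fun] using hleft x hx
  have middle := hS.integral_innerDensity_knots hn hpos hmono hG
  have right := Lambda0.integral_innerDensity_of_eqOn_Ioi G hrn hcont
    (c := c') (d := d) fun x hx => by simpa [kerL0Fun] using hright x hx
  have integrable_Ioi {α : ℝ} (hα : 0 ≤ α) : IntegrableOn (S.innerDensity G) (Ioi α) :=
    (S.integrableOn_innerDensity G).mono_set (Ioi_subset_Ioi hα)
  calc innerBL S G
      = (∫ x in 0..r 1, S.innerDensity G x) + (∫ x in r 1..r n, S.innerDensity G x) +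
          ∫ x in Ioi (r n), S.innerDensity G x := by
        rw [add_assoc, intervalIntegral.integral_interval_add_Ioi (integrable_Ioi hpos.le)
            (integrable_Ioi hrn.le),
          intervalIntegral.integral_interval_add_Ioi (integrable_Ioi le_rfl)
            (integrable_Ioi hpos.le)]
        rfl
    _ = 0 := by
        rw [left, middle, right]
        ring

end IsBLSpline

end Spline

theorem stmt7_general (n : ℕ) (r : ℕ → ℝ) (hn : 1 ≤ n) (hpos : 0 < r 1)
    (hmono : ∀ j, 1 ≤ j → j < n → r j < r (j + 1))
    (ν : ℕ → ℂ) (S F : Lambda0)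
    (hS : IsBLSpline n r S.f) (hns : NonSingularBLS (r 1) S.f)
    (hSv : ∀ j, 1 ≤ j → j ≤ n → S.f (r j) = ν j)
    (hFv : ∀ j, 1 ≤ j → j ≤ n → F.f (r j) = ν j)
    (hne : ¬ Set.EqOn F.f S.f (Set.Ioi 0)) :
    S.seminorm0 < F.seminorm0 := by
  have vanishes (j : ℕ) (hj : 1 ≤ j) (hjn : j ≤ n) : (F - S).f (r j) = 0 := by
    rw [Lambda0.sub_f, hFv j hj hjn, hSv j hj hjn, sub_self]
  have pythagoras : energySq F.f' F.f'' =
      energySq S.f' S.f'' + energySq (F - S).f' (F - S).f'' := by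
    simpa only [hS.innerBL_eq_zero hns hn hpos hmono vanishes, Complex.zero_re, mul_zero,
      add_zero] using F.energySq_eq_add_sub S
  have energy_ne_zero : energySq (F - S).f' (F - S).f'' ≠ 0 := fun hzero =>
    hne fun x hx => sub_eq_zero.1 <|
      ((F - S).f_eq_of_energySq_eq_zero hzero hx hpos).trans (vanishes 1 le_rfl hn)
  have energy_pos := (F - S).energySq_nonneg.lt_of_ne' energy_ne_zero
  exact Real.sqrt_lt_sqrt S.energySq_nonneg (by linarith)

/-- variational characterization of `σ^B`: any `f ∈ Λ₀` matching the data
`ν j` at the knots and different from the non-singular interpolant `σ^B` has strictly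
larger seminorm. -/
theorem stmt7 (n : ℕ) (r : ℕ → ℝ) (hn : 1 ≤ n) (hpos : 0 < r 1)
    (hmono : ∀ j, 1 ≤ j → j < n → r j < r (j + 1))
    (ν : ℕ → ℝ) (S F : Lambda0)
    (hS : IsBLSpline n r S.f) (hns : NonSingularBLS (r 1) S.f)
    (hSv : ∀ j, 1 ≤ j → j ≤ n → S.f (r j) = (ν j : ℂ))
    (hFv : ∀ j, 1 ≤ j → j ≤ n → F.f (r j) = (ν j : ℂ))
    (hne : ¬ Set.EqOn F.f S.f (Set.Ioi 0)) :
    S.seminorm0 < F.seminorm0 :=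
  stmt7_general n r hn hpos hmono (fun j => ν j) S F hS hns hSv hFv hne
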